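/- Let R be a commutative Noetherian ring, 𝔞 an ideal of R, 𝔭 a prime ideal of R containing 𝔞, M an R-module, and s ≥ 0, t ≥ 0 integers. Suppose that: (1) Ext^{s+t−i}_R(R/𝔭, H^i_𝔞(M)) = 0 for all integers i with 0 ≤ i < t or t+1 ≤ i ≤ s+t; (2) Ext^{s+1+i}_R(R/𝔭, H^{t−i}_𝔞(M)) = 0 for all integers 0 ≤ i ≤ t; (3) Ext^{s−1−i}_R(R/𝔭, H^{t+i}_𝔞(M)) = 0 for all integers 0 ≤ i ≤ s−1. Then the Bass numbers satisfy μ^{s+t}(𝔭, M) = μ^{s}(𝔭, H^{t}_𝔞(M)). -/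

import Mathlib

open CategoryTheory

universe u

/-- The `R`-module `Ext^i_R(N, M)` for two `R`-modules (objects of `ModuleCat R`). -/
noncomputable def extObj {R : Type u} [CommRing R] (N M : ModuleCat.{u} R) (i : ℕ) :
    ModuleCat.{u} R :=
  ((Ext R (ModuleCat.{u} R) i).obj (Opposite.op N)).obj M

/-- The `R`-module `Ext^i_R(R/𝔞, M)`. -/
noncomputable def extIdeal {R : Type u} [CommRing R] (𝔞 : Ideal R) (i : ℕ)
    (M : ModuleCat.{u} R) : ModuleCat.{u} R :=
  extObj (ModuleCat.of R (R ⧸ 𝔞)) M i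

/-- An `R`-module `M` is `𝔞`-cofinite if `Supp_R M ⊆ V(𝔞)` and `Ext^i_R(R/𝔞, M)` is a finitely
generated `R`-module for every `i ≥ 0`. -/
def IsCofinite {R : Type u} [CommRing R] (𝔞 : Ideal R) (M : ModuleCat.{u} R) : Prop :=
  Module.support R M ⊆ PrimeSpectrum.zeroLocus (𝔞 : Set R) ∧
    ∀ i : ℕ, Module.Finite R (extIdeal 𝔞 i M)

/-- The Krull dimension `dim_R M` of an `R`-module `M`: the Krull dimension of its support,
i.e. the supremum of `dim R/𝔭` over primes `𝔭` in the support of `M`. -/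
noncomputable def moduleDim (R : Type u) [CommRing R] (M : Type u) [AddCommGroup M]
    [Module R M] : WithBot ℕ∞ :=
  Order.krullDim (Module.support R M)

/-- An `R`-module `M` is in `FD_{≤n}` if there is a finitely generated submodule `N ⊆ M`
with `dim_R (M/N) ≤ n`. -/
def MemFD (R : Type u) [CommRing R] (n : ℕ) (M : Type u) [AddCommGroup M] [Module R M] : Prop :=
  ∃ N : Submodule R M, N.FG ∧ moduleDim R (M ⧸ N) ≤ (n : WithBot ℕ∞)

/-- An `R`-module `M` is `𝔞`-torsion if every element is annihilated by some power of `𝔞`. -/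
def IsTorsionIdeal {R : Type u} [CommRing R] (𝔞 : Ideal R) (M : Type u) [AddCommGroup M]
    [Module R M] : Prop :=
  ∀ m : M, ∃ n : ℕ, ∀ a ∈ 𝔞 ^ n, a • m = 0

/-- The arithmetic rank of an ideal `𝔞`: the least `n` such that there exist `a₁, …, aₙ ∈ R`
with `Rad (a₁, …, aₙ) = Rad 𝔞`. -/
noncomputable def arithRank {R : Type u} [CommRing R] (𝔞 : Ideal R) : ℕ :=
  sInf {n : ℕ | ∃ f : Fin n → R, (Ideal.span (Set.range f)).radical = 𝔞.radical}

/-- The Bass number `μ^j(𝔭, M)`: the dimension of the `κ(𝔭)`-vector space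
`Ext^j_{R_𝔭}(κ(𝔭), M_𝔭)`, where `κ(𝔭) = R_𝔭/𝔭R_𝔭`. Since this Ext module is a vector space
over the residue field `κ(𝔭)`, its `R_𝔭`-submodules are exactly its `κ(𝔭)`-subspaces, and its
dimension is the Krull dimension of its lattice of `R_𝔭`-submodules, which we use as the
definition (an element of `WithBot ℕ∞`). -/
noncomputable def bassNumber {R : Type u} [CommRing R] (𝔭 : Ideal R) [𝔭.IsPrime] (j : ℕ)
    (M : ModuleCat.{u} R) : WithBot ℕ∞ :=
  Order.krullDim (Submodule (Localization.AtPrime 𝔭)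
    (extObj
      (ModuleCat.of (Localization.AtPrime 𝔭)
        (IsLocalRing.ResidueField (Localization.AtPrime 𝔭)))
      (ModuleCat.of (Localization.AtPrime 𝔭) (LocalizedModule 𝔭.primeCompl M)) j))

/-!
Let `I` be an injective resolution of `M`. Over a noetherian ring `Γ_𝔞(I)` is again a complex of
injectives; its cohomology is `H^q_𝔞(M)`, and `Hom(R/𝔭, Γ_𝔞(I)) = Hom(R/𝔭, I)` because `R/𝔭` is
`𝔞`-torsion. The resulting spectral sequence `Ext^p(R/𝔭, H^q_𝔞(M)) ⟹ Ext^{p+q}(R/𝔭, M)` has, under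
the vanishing hypotheses, only the entry `(s, t)` in total degree `s + t`, and no differential
enters or leaves it, so `Ext^{s+t}(R/𝔭, M) ≅ Ext^s(R/𝔭, H^t_𝔞(M))`. Instead of a spectral sequence
we chase the long exact sequences of `0 → Bⁿ → Zⁿ → Hⁿ → 0` and `0 → Zⁿ → Kⁿ → Bⁿ⁺¹ → 0`.
Localizing this isomorphism at `𝔭` compares the Bass numbers.
-/

open Limits Abelian

universe w v t

section HomCohomology

lemma toCycles_naturality {C : Type u} [Category.{v} C] [Abelian C] {K L : CochainComplex C ℕ}
    (φ : K ⟶ L) (i j : ℕ) :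
    φ.f i ≫ L.toCycles i j = K.toCycles i j ≫ HomologicalComplex.cyclesMap φ j := by
  simp [← cancel_mono (L.iCycles j)]

lemma bijective_comp_cyclesMap {C : Type u} [Category.{v} C] [Abelian C] {X : C}
    {K L : CochainComplex C ℕ} (φ : K ⟶ L)
    (hφ : ∀ i, Function.Bijective fun f : X ⟶ K.X i => f ≫ φ.f i) (n : ℕ) :
    Function.Bijective fun z : X ⟶ K.cycles n => z ≫ HomologicalComplex.cyclesMap φ n := by
  constructor
  · intro z z' h
    rw [← cancel_mono (K.iCycles n)]
    apply (hφ n).injective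
    simpa using congr($h ≫ L.iCycles n)
  · intro z
    obtain ⟨f, hf⟩ := (hφ n).surjective (z ≫ L.iCycles n)
    have hfd : f ≫ K.d n (n + 1) = 0 := (hφ (n + 1)).injective <| by
      simpa using congr($hf ≫ L.d n (n + 1))
    refine ⟨K.liftCycles f (n + 1) (by simp) hfd, ?_⟩
    rw [← cancel_mono (L.iCycles n)]
    simpa using hf

variable (R : Type t) [CommRing R] {C : Type u} [Category.{v} C] [Abelian C] [Linear R C]

/-- The cohomology in degree `n` of the complex `Hom(X, K)`, presented through the morphisms
`X ⟶ K.cycles n`. In degree `0` the map that is divided out is `0`, as `prev 0 = 0`. -/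
abbrev HomCohomology (X : C) (K : CochainComplex C ℕ) (n : ℕ) : Type _ :=
  (X ⟶ K.cycles n) ⧸
    LinearMap.range (Linear.rightComp R X (K.toCycles ((ComplexShape.up ℕ).prev n) n))

namespace HomCohomology

variable {R}

/-- The map on the cohomology of `Hom(-, K)` induced by a morphism in the first argument. -/
noncomputable def precomp {X X' : C} (g : X' ⟶ X) (K : CochainComplex C ℕ) (n : ℕ) :
    HomCohomology R X K n →ₗ[R] HomCohomology R X' K n :=
  Submodule.mapQ _ _ (Linear.leftComp R _ g) (by
    rintro _ ⟨y, rfl⟩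
    exact ⟨g ≫ y, Category.assoc _ _ _⟩)

/-- The map on the cohomology of `Hom(X, -)` induced by a morphism of complexes. -/
noncomputable def map (X : C) {K L : CochainComplex C ℕ} (φ : K ⟶ L) (n : ℕ) :
    HomCohomology R X K n →ₗ[R] HomCohomology R X L n :=
  Submodule.mapQ _ _ (Linear.rightComp R X (HomologicalComplex.cyclesMap φ n)) (by
    rintro _ ⟨y, rfl⟩
    exact ⟨y ≫ φ.f _, by simp [toCycles_naturality]⟩)

lemma map_precomp {X X' : C} (g : X' ⟶ X) {K L : CochainComplex C ℕ} (φ : K ⟶ L) (n : ℕ)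
    (x : HomCohomology R X K n) :
    map X' φ n (precomp g K n x) = precomp g L n (map X φ n x) := by
  obtain ⟨z, rfl⟩ := Submodule.mkQ_surjective _ x
  simp [map, precomp]

lemma map_bijective {X : C} {K L : CochainComplex C ℕ} (φ : K ⟶ L)
    (hφ : ∀ i, Function.Bijective fun f : X ⟶ K.X i => f ≫ φ.f i) (n : ℕ) :
    Function.Bijective (map (R := R) X φ n) := by
  have hz := bijective_comp_cyclesMap φ hφ n
  constructor
  · refine (injective_iff_map_eq_zero _).2 fun x hx => ?_
    obtain ⟨z, rfl⟩ := Submodule.mkQ_surjective _ x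
    obtain ⟨w, hw⟩ := (Submodule.Quotient.mk_eq_zero _).1 hx
    obtain ⟨y, rfl⟩ := (hφ _).surjective w
    exact (Submodule.Quotient.mk_eq_zero _).2
      ⟨y, hz.injective (by simpa [toCycles_naturality] using hw)⟩
  · intro x
    obtain ⟨z, rfl⟩ := Submodule.mkQ_surjective _ x
    obtain ⟨y, rfl⟩ := hz.surjective z
    exact ⟨Submodule.Quotient.mk y, rfl⟩

end HomCohomology

end HomCohomology

section extMk

variable {C : Type u} [Category.{v} C] [Abelian C] [HasExt.{w} C] {X Y : C} {n : ℕ}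

lemma injective_extMk_zero_eq_zero_iff (I : InjectiveResolution Y) (f : X ⟶ I.cocomplex.X 0)
    (hf : f ≫ I.cocomplex.d 0 1 = 0) : I.extMk f 1 rfl hf = 0 ↔ f = 0 := by
  refine ⟨fun h => ?_, by rintro rfl; simp⟩
  have hz : IsZero (I.cochainComplex.X (-1)) :=
    I.cochainComplex.isZero_of_isStrictlyGE 0 (-1) (by lia)
  simp only [← I.extEquivCohomologyClass.apply_eq_iff_eq,
    InjectiveResolution.extEquivCohomologyClass_extMk,
    InjectiveResolution.extEquivCohomologyClass_zero,
    CochainComplex.HomComplex.CohomologyClass.mk_eq_zero_iff] at h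
  rw [CochainComplex.HomComplex.Cocycle.fromSingleMk_mem_coboundaries_iff _ _ _ _ _ (-1)
    (by lia)] at h
  obtain ⟨g, hg⟩ := h
  simpa [hz.eq_of_tgt g 0] using hg.symm

lemma injective_extMk_eq_zero_iff_exists_prev (I : InjectiveResolution Y)
    (f : X ⟶ I.cocomplex.X n) (hf : f ≫ I.cocomplex.d n (n + 1) = 0) :
    I.extMk f (n + 1) rfl hf = 0 ↔
      ∃ g, g ≫ I.cocomplex.d ((ComplexShape.up ℕ).prev n) n = f := by
  cases n with
  | zero => simpa [eq_comm (b := f)] using injective_extMk_zero_eq_zero_iff I f hf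
  | succ n =>
    rw [CochainComplex.prev_nat_succ]
    exact I.extMk_eq_zero_iff f _ rfl hf n rfl

lemma projective_extMk_zero_eq_zero_iff (P : ProjectiveResolution X) (f : P.complex.X 0 ⟶ Y)
    (hf : P.complex.d 1 0 ≫ f = 0) : P.extMk f 1 rfl hf = 0 ↔ f = 0 := by
  refine ⟨fun h => ?_, by rintro rfl; simp⟩
  have hz : IsZero (P.cochainComplex.X 1) :=
    P.cochainComplex.isZero_of_isStrictlyLE 0 1 (by lia)
  simp only [← P.extEquivCohomologyClass.apply_eq_iff_eq,
    ProjectiveResolution.extEquivCohomologyClass_extMk,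
    ProjectiveResolution.extEquivCohomologyClass_zero,
    CochainComplex.HomComplex.CohomologyClass.mk_eq_zero_iff] at h
  rw [CochainComplex.HomComplex.Cocycle.toSingleMk_mem_coboundaries_iff _ _ _ _ _ 1
    (by lia)] at h
  obtain ⟨g, hg⟩ := h
  simpa [hz.eq_of_src g 0] using hg.symm

lemma projective_extMk_eq_zero_iff_exists_prev (P : ProjectiveResolution X)
    (f : P.complex.X n ⟶ Y) (hf : P.complex.d (n + 1) n ≫ f = 0) :
    P.extMk f (n + 1) rfl hf = 0 ↔
      ∃ g, P.complex.d n ((ComplexShape.up ℕ).prev n) ≫ g = f := by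
  cases n with
  | zero => simpa [eq_comm (b := f)] using projective_extMk_zero_eq_zero_iff P f hf
  | succ n =>
    rw [CochainComplex.prev_nat_succ]
    exact P.extMk_eq_zero_iff f _ rfl hf n rfl

end extMk

section InjectiveResolution

variable {R : Type t} [CommRing R] {C : Type u} [Category.{v} C] [Abelian C] [Linear R C]
  [HasExt.{w} C] {M : C} (I : InjectiveResolution M)

namespace HomCohomology

variable (R) in
/-- The class in `Ext X M n` of a morphism from `X` to the cycles of an injective resolution of
`M`. -/
noncomputable def cyclesToExt (X : C) (n : ℕ) : (X ⟶ I.cocomplex.cycles n) →ₗ[R] Ext X M n where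
  toFun z := I.extMk (z ≫ I.cocomplex.iCycles n) (n + 1) rfl (by simp)
  map_add' z z' := by simp only [Preadditive.add_comp, I.add_extMk]
  map_smul' r z := by
    have h := I.mk₀_comp_extMk (z ≫ I.cocomplex.iCycles n) (n + 1) rfl (by simp) (r • 𝟙 X)
    simpa [Ext.mk₀_smul] using h.symm

lemma cyclesToExt_surjective (X : C) (n : ℕ) :
    Function.Surjective (cyclesToExt R I X n) := by
  intro α
  obtain ⟨f, hf, rfl⟩ := I.extMk_surjective α (n + 1) rfl
  exact ⟨I.cocomplex.liftCycles f (n + 1) (by simp) hf, by simp [cyclesToExt]⟩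

lemma exact_cyclesToExt (X : C) (n : ℕ) : Function.Exact
    (Linear.rightComp R X (I.cocomplex.toCycles ((ComplexShape.up ℕ).prev n) n))
    (cyclesToExt R I X n) := fun z => by
  refine (injective_extMk_eq_zero_iff_exists_prev I _
    (by simp)).trans (exists_congr fun g => ?_)
  simp [← cancel_mono (I.cocomplex.iCycles n)]

variable (R) in
/-- The cohomology of `Hom(X, I)`, for an injective resolution `I` of `M`, is `Ext X M n`. -/
noncomputable def extEquiv (X : C) (n : ℕ) :
    HomCohomology R X I.cocomplex n ≃ₗ[R] Ext X M n :=
  (exact_cyclesToExt I X n).linearEquivOfSurjective (cyclesToExt_surjective I X n)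

lemma extEquiv_mk {X : C} {n : ℕ} (z : X ⟶ I.cocomplex.cycles n) :
    extEquiv R I X n (Submodule.Quotient.mk z) =
      I.extMk (z ≫ I.cocomplex.iCycles n) (n + 1) rfl (by simp) := rfl

lemma extEquiv_precomp {X X' : C} (g : X' ⟶ X) (n : ℕ) (x : HomCohomology R X I.cocomplex n) :
    extEquiv R I X' n (precomp g _ n x) =
      (Ext.mk₀ g).comp (extEquiv R I X n x) (zero_add n) := by
  obtain ⟨z, rfl⟩ := Submodule.mkQ_surjective _ x
  simp [precomp, extEquiv_mk, I.mk₀_comp_extMk]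

end HomCohomology

end InjectiveResolution

section ModuleCat

variable {R : Type t} [CommRing R] (K : CochainComplex (ModuleCat.{v} R) ℕ) (n : ℕ)

lemma exact_toCycles_homologyπ :
    Function.Exact (K.toCycles ((ComplexShape.up ℕ).prev n) n).hom (K.homologyπ n).hom :=
  (ShortComplex.ShortExact.moduleCat_exact_iff_function_exact
    (ShortComplex.mk _ _ (K.toCycles_comp_homologyπ _ n))).1
    (ShortComplex.exact_of_g_is_cokernel _ (K.homologyIsCokernel _ n rfl))

/-- The homology of a complex of modules as the quotient of the cycles by the boundaries. -/
noncomputable def cyclesQuotientEquivHomology :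
    (K.cycles n ⧸ LinearMap.range (K.toCycles ((ComplexShape.up ℕ).prev n) n).hom) ≃ₗ[R]
      K.homology n :=
  (exact_toCycles_homologyπ K n).linearEquivOfSurjective
    ((ModuleCat.epi_iff_surjective (K.homologyπ n)).1 inferInstance)

end ModuleCat

section LinearYoneda

variable {R : Type t} [CommRing R] {C : Type u} [Category.{v} C] [Abelian C] [Linear R C]

variable (R) in
/-- The map `Hom(K, Y) ⟶ Hom(L, Y)` of cochain complexes induced by `φ : L ⟶ K`. -/
noncomputable def linearYonedaObjMap {K L : ChainComplex C ℕ} (φ : L ⟶ K) (Y : C) :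
    K.linearYonedaObj R Y ⟶ L.linearYonedaObj R Y :=
  (HomologicalComplex.unopFunctor _ _).map
    ((((linearYoneda R C).obj Y).rightOp.mapHomologicalComplex _).map φ).op

lemma homologyUnop_hom_naturality {V ι : Type*} [Category* V] [Abelian V] {c : ComplexShape ι}
    {K L : HomologicalComplex Vᵒᵖ c} (φ : K ⟶ L) (i : ι) :
    HomologicalComplex.homologyMap ((HomologicalComplex.unopFunctor V c).map φ.op) i ≫
        (K.homologyUnop i).hom =
      (L.homologyUnop i).hom ≫ (HomologicalComplex.homologyMap φ i).unop :=
  (congr_arg Quiver.Hom.unop (HomologicalComplex.homologyOp_hom_naturality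
    ((HomologicalComplex.unopFunctor V c).map φ.op) i)).symm

lemma isoExt_hom_naturality [EnoughProjectives C] {X X' : C} {P : ProjectiveResolution X}
    {P' : ProjectiveResolution X'} {g : X' ⟶ X} (φ : ProjectiveResolution.Hom P' P g) (n : ℕ)
    (Y : C) :
    ((_root_.Ext R C n).map g.op).app Y ≫ (P'.isoExt n Y).hom =
      (P.isoExt n Y).hom ≫ HomologicalComplex.homologyMap (linearYonedaObjMap R φ.hom Y) n := by
  let F := ((linearYoneda R C).obj Y).rightOp
  have derived : CommSq (P.isoLeftDerivedObj F n).inv.unop (((_root_.Ext R C n).map g.op).app Y)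
      (HomologicalComplex.homologyMap ((F.mapHomologicalComplex _).map φ.hom) n).unop
      (P'.isoLeftDerivedObj F n).inv.unop :=
    ⟨congr(($(ProjectiveResolution.isoLeftDerivedObj_inv_naturality g P' P φ.hom
      (by simpa using! φ.hom_f_zero_comp_π_f_zero) F n)).unop).symm⟩
  have unop := CommSq.horiz_inv
    ⟨(homologyUnop_hom_naturality ((F.mapHomologicalComplex _).map φ.hom) n).symm⟩
  exact (derived.horiz_comp unop).w.symm

variable (R) in
/-- The cycles of `Hom(K, Y)` in degree `n`, as morphisms `K.X n ⟶ Y`. -/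
noncomputable def yonedaCyclesι (K : ChainComplex C ℕ) (Y : C) (n : ℕ) :
    (K.linearYonedaObj R Y).cycles n →ₗ[R] (K.X n ⟶ Y) :=
  ((K.linearYonedaObj R Y).iCycles n).hom

lemma d_comp_yonedaCyclesι (K : ChainComplex C ℕ) (Y : C) (n : ℕ)
    (z : (K.linearYonedaObj R Y).cycles n) : K.d (n + 1) n ≫ yonedaCyclesι R K Y n z = 0 :=
  congr($((K.linearYonedaObj R Y).iCycles_d n (n + 1)).hom z)

lemma yonedaCyclesι_injective (K : ChainComplex C ℕ) (Y : C) (n : ℕ) :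
    Function.Injective (yonedaCyclesι R K Y n) :=
  (ModuleCat.mono_iff_injective ((K.linearYonedaObj R Y).iCycles n)).1 inferInstance

lemma yonedaCyclesι_cyclesMap {K L : ChainComplex C ℕ} (φ : L ⟶ K) (Y : C) (n : ℕ)
    (z : (K.linearYonedaObj R Y).cycles n) :
    yonedaCyclesι R L Y n ((HomologicalComplex.cyclesMap (linearYonedaObjMap R φ Y) n).hom z) =
      φ.f n ≫ yonedaCyclesι R K Y n z :=
  congr($(HomologicalComplex.cyclesMap_i (linearYonedaObjMap R φ Y) n).hom z)

lemma exists_yonedaCyclesι_eq {K : ChainComplex C ℕ} {Y : C} {n : ℕ} (f : K.X n ⟶ Y)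
    (hf : K.d (n + 1) n ≫ f = 0) : ∃ z, yonedaCyclesι R K Y n z = f :=
  ⟨(K.linearYonedaObj R Y).cyclesMk f (n + 1) (by simp) hf,
    (K.linearYonedaObj R Y).i_cyclesMk f (n + 1) (by simp) hf⟩

variable [HasExt.{w} C] {X : C} (P : ProjectiveResolution X)

variable (R) in
/-- The class in `Ext X Y n` of a cycle of `Hom(P, Y)`, for a projective resolution `P` of `X`. -/
noncomputable def yonedaCyclesToExt (Y : C) (n : ℕ) :
    (P.complex.linearYonedaObj R Y).cycles n →ₗ[R] Ext X Y n where
  toFun z := P.extMk (yonedaCyclesι R P.complex Y n z) (n + 1) rfl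
    (d_comp_yonedaCyclesι P.complex Y n z)
  map_add' z z' := by simp only [map_add, P.add_extMk]
  map_smul' r z := by
    have h := P.extMk_comp_mk₀ (yonedaCyclesι R P.complex Y n z) (n + 1) rfl
      (d_comp_yonedaCyclesι P.complex Y n z) (r • 𝟙 Y)
    simpa [Ext.mk₀_smul] using h.symm

lemma yonedaCyclesToExt_surjective (Y : C) (n : ℕ) :
    Function.Surjective (yonedaCyclesToExt R P Y n) := by
  intro α
  obtain ⟨f, hf, rfl⟩ := P.extMk_surjective α (n + 1) rfl
  obtain ⟨z, hz⟩ := exists_yonedaCyclesι_eq (R := R) f hf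
  exact ⟨z, by simp only [← hz]; rfl⟩

lemma exact_yonedaCyclesToExt (Y : C) (n : ℕ) : Function.Exact
    ((P.complex.linearYonedaObj R Y).toCycles ((ComplexShape.up ℕ).prev n) n).hom
    (yonedaCyclesToExt R P Y n) := fun z => by
  refine (projective_extMk_eq_zero_iff_exists_prev P _ (d_comp_yonedaCyclesι ..)).trans
    (exists_congr fun g => ?_)
  rw [← (yonedaCyclesι_injective P.complex Y n).eq_iff]
  exact Eq.congr congr($((P.complex.linearYonedaObj R Y).toCycles_i _ n).hom g).symm rfl

variable (R) in
/-- The homology of `Hom(P, Y)`, for a projective resolution `P` of `X`, is `Ext X Y n`. -/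
noncomputable def yonedaHomologyEquiv (Y : C) (n : ℕ) :
    (P.complex.linearYonedaObj R Y).homology n ≃ₗ[R] Ext X Y n :=
  (cyclesQuotientEquivHomology _ n).symm ≪≫ₗ
    (exact_yonedaCyclesToExt P Y n).linearEquivOfSurjective (yonedaCyclesToExt_surjective P Y n)

lemma yonedaHomologyEquiv_homologyπ (Y : C) (n : ℕ)
    (z : (P.complex.linearYonedaObj R Y).cycles n) :
    yonedaHomologyEquiv R P Y n (((P.complex.linearYonedaObj R Y).homologyπ n).hom z) =
      yonedaCyclesToExt R P Y n z :=
  congr_arg ((exact_yonedaCyclesToExt P Y n).linearEquivOfSurjective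
    (yonedaCyclesToExt_surjective P Y n))
    ((cyclesQuotientEquivHomology _ n).symm_apply_apply (Submodule.Quotient.mk z))

lemma yonedaHomologyEquiv_naturality {X' : C} {P' : ProjectiveResolution X'} {P} {g : X' ⟶ X}
    (φ : ProjectiveResolution.Hom P' P g) (Y : C) (n : ℕ)
    (x : (P.complex.linearYonedaObj R Y).homology n) :
    yonedaHomologyEquiv R P' Y n
        ((HomologicalComplex.homologyMap (linearYonedaObjMap R φ.hom Y) n).hom x) =
      (Ext.mk₀ g).comp (yonedaHomologyEquiv R P Y n x) (zero_add n) := by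
  obtain ⟨z, rfl⟩ :=
    (ModuleCat.epi_iff_surjective ((P.complex.linearYonedaObj R Y).homologyπ n)).1 inferInstance x
  have hπ :=
    congr($(HomologicalComplex.homologyπ_naturality (linearYonedaObjMap R φ.hom Y) n).hom z)
  refine congr(yonedaHomologyEquiv R P' Y n $hπ).trans ?_
  rw [yonedaHomologyEquiv_homologyπ]
  refine (yonedaHomologyEquiv_homologyπ P' Y n _).trans <| Eq.trans ?_
    (P.mk₀_comp_extMk _ (n + 1) rfl (d_comp_yonedaCyclesι ..) φ).symm
  simp only [← yonedaCyclesι_cyclesMap]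
  rfl

variable [EnoughProjectives C]

variable (R) in
/-- The `Ext` modules defined by left derived functors agree with those of `Abelian.Ext`. -/
noncomputable def extLinearEquiv (X Y : C) (n : ℕ) :
    ((_root_.Ext R C n).obj (.op X)).obj Y ≃ₗ[R] Ext X Y n :=
  ((projectiveResolution X).isoExt n Y).toLinearEquiv ≪≫ₗ
    yonedaHomologyEquiv R (projectiveResolution X) Y n

lemma extLinearEquiv_naturality {X X' : C} (g : X' ⟶ X) (Y : C) (n : ℕ)
    (x : ((_root_.Ext R C n).obj (.op X)).obj Y) :
    extLinearEquiv R X' Y n ((((_root_.Ext R C n).map g.op).app Y).hom x) =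
      (Ext.mk₀ g).comp (extLinearEquiv R X Y n x) (zero_add n) := by
  let φ : ProjectiveResolution.Hom (projectiveResolution X') (projectiveResolution X) g :=
    { hom := ProjectiveResolution.lift g _ _
      hom_f_zero_comp_π_f_zero := (ProjectiveResolution.lift_commutes_zero g _ _).trans
        (by simp) }
  have h := ConcreteCategory.congr_hom (isoExt_hom_naturality (R := R) φ n Y) x
  exact congr(yonedaHomologyEquiv R (projectiveResolution X') Y n $h).trans
    (yonedaHomologyEquiv_naturality φ Y n _)

end LinearYoneda

section ShortExact

variable {R : Type t} [CommRing R] {C : Type u} [Category.{v} C] [Abelian C] [Linear R C]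
  {S : ShortComplex C} (X : C)

lemma rightComp_injective {Y Z : C} (f : Y ⟶ Z) [Mono f] :
    Function.Injective (Linear.rightComp R X f) := fun _ _ h => (cancel_mono f).1 h

lemma exact_rightComp (hS : S.ShortExact) :
    Function.Exact (Linear.rightComp R X S.f) (Linear.rightComp R X S.g) := fun f => by
  have := hS.mono_f
  constructor
  · exact fun h => ⟨hS.exact.lift f h, hS.exact.lift_f f h⟩
  · rintro ⟨g, rfl⟩
    simp

variable [HasExt.{w} C]

lemma subsingleton_ext_X₂ (hS : S.ShortExact) (n : ℕ) [Subsingleton (Ext X S.X₁ n)]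
    [Subsingleton (Ext X S.X₃ n)] : Subsingleton (Ext X S.X₂ n) := by
  refine subsingleton_of_forall_eq 0 fun x => ?_
  obtain ⟨y, rfl⟩ := Ext.covariant_sequence_exact₂ X hS x (Subsingleton.elim _ _)
  rw [Subsingleton.elim y 0, Ext.zero_comp]

/-- The connecting homomorphism `Hom(X, S.X₃) → Ext¹(X, S.X₁)`. -/
noncomputable def homToExtOne (R : Type t) [CommRing R] [Linear R C] (hS : S.ShortExact) :
    (X ⟶ S.X₃) →ₗ[R] Ext X S.X₁ 1 :=
  hS.extClass.postcompOfLinear R X (zero_add 1) ∘ₗ (Ext.linearEquiv₀ (R := R)).symm.toLinearMap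

lemma homToExtOne_surjective (hS : S.ShortExact) [Subsingleton (Ext X S.X₂ 1)] :
    Function.Surjective (homToExtOne X R hS) := by
  intro x
  obtain ⟨y, rfl⟩ := Ext.covariant_sequence_exact₁ X hS x (Subsingleton.elim _ _) (zero_add 1)
  exact ⟨Ext.linearEquiv₀ (R := R) y, by simp [homToExtOne]⟩

lemma exact_homToExtOne (hS : S.ShortExact) :
    Function.Exact (Linear.rightComp R X S.g) (homToExtOne X R hS) := fun f => by
  constructor
  · intro h
    obtain ⟨y, hy⟩ := Ext.covariant_sequence_exact₃ X hS (Ext.mk₀ f) (zero_add 1) h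
    obtain ⟨g, rfl⟩ := (Ext.mk₀_bijective _ _).2 y
    rw [Ext.mk₀_comp_mk₀] at hy
    exact ⟨g, (Ext.mk₀_bijective _ _).1 hy⟩
  · rintro ⟨g, rfl⟩
    change (Ext.mk₀ (g ≫ S.g)).comp hS.extClass (zero_add 1) = 0
    rw [← Ext.mk₀_comp_mk₀, Ext.comp_assoc_of_second_deg_zero, hS.comp_extClass, Ext.comp_zero]

lemma rightComp_surjective_of_subsingleton_ext (hS : S.ShortExact) [Subsingleton (Ext X S.X₁ 1)] :
    Function.Surjective (Linear.rightComp R X S.g) := fun f =>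
  (exact_homToExtOne X hS f).1 (Subsingleton.elim _ _)

variable (R) in
lemma nonempty_ext_X₃_linearEquiv_ext_X₁ (hS : S.ShortExact) (n : ℕ)
    [Subsingleton (Ext X S.X₂ n)] [Subsingleton (Ext X S.X₂ (n + 1))] :
    Nonempty (Ext X S.X₃ n ≃ₗ[R] Ext X S.X₁ (n + 1)) := by
  refine ⟨.ofBijective (hS.extClass.postcompOfLinear R X rfl) ⟨?_, fun x => ?_⟩⟩
  · refine (injective_iff_map_eq_zero _).2 fun x hx => ?_
    obtain ⟨y, rfl⟩ := Ext.covariant_sequence_exact₃ X hS x rfl hx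
    rw [Subsingleton.elim y 0, Ext.zero_comp]
  · exact Ext.covariant_sequence_exact₁ X hS x (Subsingleton.elim _ _) rfl

variable (R) in
lemma nonempty_ext_X₂_linearEquiv_ext_X₃ (hS : S.ShortExact) (n : ℕ)
    [Subsingleton (Ext X S.X₁ n)] [Subsingleton (Ext X S.X₁ (n + 1))] :
    Nonempty (Ext X S.X₂ n ≃ₗ[R] Ext X S.X₃ n) := by
  refine ⟨.ofBijective ((Ext.mk₀ S.g).postcompOfLinear R X (add_zero n)) ⟨?_, fun x => ?_⟩⟩
  · refine (injective_iff_map_eq_zero _).2 fun x hx => ?_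
    obtain ⟨y, rfl⟩ := Ext.covariant_sequence_exact₂ X hS x hx
    rw [Subsingleton.elim y 0, Ext.zero_comp]
  · exact Ext.covariant_sequence_exact₃ X hS x rfl (Subsingleton.elim _ _)

variable (R) in
lemma nonempty_ext_X₁_linearEquiv_ext_X₂ (hS : S.ShortExact) (n : ℕ)
    [Subsingleton (Ext X S.X₃ n)] [Subsingleton (Ext X S.X₃ (n + 1))] :
    Nonempty (Ext X S.X₁ (n + 1) ≃ₗ[R] Ext X S.X₂ (n + 1)) := by
  refine ⟨.ofBijective ((Ext.mk₀ S.f).postcompOfLinear R X (add_zero _)) ⟨?_, fun x => ?_⟩⟩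
  · refine (injective_iff_map_eq_zero _).2 fun x hx => ?_
    obtain ⟨y, rfl⟩ := Ext.covariant_sequence_exact₁ X hS x hx rfl
    rw [Subsingleton.elim y 0, Ext.zero_comp]
  · exact Ext.covariant_sequence_exact₂ X hS x (Subsingleton.elim _ _)

end ShortExact

section Boundaries

variable {C : Type u} [Category.{v} C] [Abelian C] (K : CochainComplex C ℕ)

/-- The boundaries in degree `n`, as the kernel of the projection from cycles to homology. -/
noncomputable def boundaries (n : ℕ) : C := kernel (K.homologyπ n)

/-- The inclusion of the boundaries into the cycles. -/
noncomputable def boundariesι (n : ℕ) : boundaries K n ⟶ K.cycles n := kernel.ι _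

instance (n : ℕ) : Mono (boundariesι K n) := inferInstanceAs (Mono (kernel.ι _))

/-- The differential `K.X i ⟶ K.X n`, as a morphism to the boundaries. -/
noncomputable def toBoundaries (i n : ℕ) : K.X i ⟶ boundaries K n :=
  kernel.lift _ (K.toCycles i n) (K.toCycles_comp_homologyπ i n)

@[simp]
lemma toBoundaries_ι (i n : ℕ) :
    toBoundaries K i n ≫ boundariesι K n = K.toCycles i n := kernel.lift_ι _ _ _

@[simp]
lemma toBoundaries_ι_iCycles (i n : ℕ) :
    toBoundaries K i n ≫ boundariesι K n ≫ K.iCycles n = K.d i n := by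
  simp [← Category.assoc]

lemma isZero_boundaries_zero : IsZero (boundaries K 0) := by
  have : IsIso (K.homologyπ 0) := K.isIso_homologyπ 0 0 (by simp) (by simp)
  exact isZero_kernel_of_mono _

lemma epi_toBoundaries (n : ℕ) : Epi (toBoundaries K n (n + 1)) :=
  (ShortComplex.mk _ _ (K.toCycles_comp_homologyπ n (n + 1))).exact_iff_epi_kernel_lift.1
    (ShortComplex.exact_of_g_is_cokernel _ (K.homologyIsCokernel n (n + 1) (by simp)))

/-- The short complex `Bⁿ ⟶ Zⁿ ⟶ Hⁿ` of boundaries, cycles and homology. -/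
noncomputable abbrev homologySequence (n : ℕ) : ShortComplex C :=
  ShortComplex.mk (boundariesι K n) (K.homologyπ n) (kernel.condition _)

lemma shortExact_homologySequence (n : ℕ) : (homologySequence K n).ShortExact where
  exact := ShortComplex.exact_kernel _

/-- The short complex `Zⁿ ⟶ Kⁿ ⟶ Bⁿ⁺¹`. -/
noncomputable abbrev cyclesSequence (n : ℕ) : ShortComplex C :=
  ShortComplex.mk (K.iCycles n) (toBoundaries K n (n + 1)) (by
    simp [← cancel_mono (boundariesι K _), ← cancel_mono (K.iCycles _)])

lemma shortExact_cyclesSequence (n : ℕ) : (cyclesSequence K n).ShortExact where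
  exact := ShortComplex.exact_of_f_is_kernel _ (isKernelOfComp
    (boundariesι K (n + 1) ≫ K.iCycles (n + 1)) _ (K.cyclesIsKernel n (n + 1) (by simp)) _
    (by simp))
  epi_g := epi_toBoundaries K n

variable {K} {R : Type t} [CommRing R] [Linear R C] {X : C}

variable (R X K) in
lemma rightComp_toCycles (i n : ℕ) : Linear.rightComp R X (K.toCycles i n) =
    Linear.rightComp R X (boundariesι K n) ∘ₗ Linear.rightComp R X (toBoundaries K i n) := by
  ext f
  simp

variable (R X) in
lemma bijective_rightComp_boundariesι (n : ℕ) [Subsingleton (X ⟶ K.homology n)] :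
    Function.Bijective (Linear.rightComp R X (boundariesι K n)) :=
  ⟨rightComp_injective X _, fun f =>
    (exact_rightComp X (shortExact_homologySequence K n) f).1 (Subsingleton.elim _ _)⟩

variable [HasExt.{w} C]

section Vanishing

variable [∀ n, Injective (K.X n)]

instance (n : ℕ) : Injective (cyclesSequence K n).X₂ := inferInstanceAs (Injective (K.X n))

lemma subsingleton_ext_boundaries {t T : ℕ}
    (h : ∀ p q, p + q = T → q < t → Subsingleton (Ext X (K.homology q) p))
    {n : ℕ} (hn : n ≤ t) (k : ℕ) (hk : k + 1 + n = T) :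
    Subsingleton (Ext X (boundaries K n) (k + 1)) := by
  induction n generalizing k with
  | zero =>
    have := (isZero_boundaries_zero K).injective
    exact Ext.subsingleton_of_injective _ _ k
  | succ n ih =>
    have := Ext.subsingleton_of_injective X (K.X n) k
    have := Ext.subsingleton_of_injective X (K.X n) (k + 1)
    obtain ⟨e⟩ := nonempty_ext_X₃_linearEquiv_ext_X₁ ℤ X (shortExact_cyclesSequence K n) (k + 1)
    have := ih (by lia) (k + 1) (by lia)
    have := h (k + 2) n (by lia) hn
    have := subsingleton_ext_X₂ X (shortExact_homologySequence K n) (k + 2)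
    exact e.toEquiv.subsingleton

lemma subsingleton_ext_cycles {t T : ℕ}
    (h : ∀ p q, p + q = T → q < t → Subsingleton (Ext X (K.homology q) p))
    {n : ℕ} (hn : n < t) (k : ℕ) (hk : k + 1 + n = T) :
    Subsingleton (Ext X (K.cycles n) (k + 1)) := by
  have := subsingleton_ext_boundaries h hn.le k hk
  have := h (k + 1) n hk hn
  exact subsingleton_ext_X₂ X (shortExact_homologySequence K n) (k + 1)

variable (R) in
lemma nonempty_ext_cycles_linearEquiv {t m : ℕ}
    (h : ∀ p q, p + q = m + 1 → t < q → Subsingleton (Ext X (K.homology q) p))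
    (h' : ∀ p q, p + q = m → t < q → Subsingleton (Ext X (K.homology q) p))
    {n : ℕ} (k : ℕ) (hn : t ≤ n) (hk : n + k = m) :
    Nonempty (Ext X (K.cycles n) (k + 1) ≃ₗ[R] Ext X (K.cycles m) 1) := by
  induction k generalizing n with
  | zero => obtain rfl : n = m := hk; exact ⟨.refl R _⟩
  | succ k ih =>
    have := Ext.subsingleton_of_injective X (K.X n) k
    have := Ext.subsingleton_of_injective X (K.X n) (k + 1)
    obtain ⟨e⟩ := nonempty_ext_X₃_linearEquiv_ext_X₁ R X (shortExact_cyclesSequence K n) (k + 1)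
    have := h' k (n + 1) (by lia) (by lia)
    have := h (k + 1) (n + 1) (by lia) (by lia)
    obtain ⟨e'⟩ := nonempty_ext_X₁_linearEquiv_ext_X₂ R X (shortExact_homologySequence K (n + 1)) k
    obtain ⟨e''⟩ := ih (n := n + 1) (by lia) (by lia)
    exact ⟨e.symm ≪≫ₗ e' ≪≫ₗ e''⟩

end Vanishing

variable (R) in
lemma rightComp_toBoundaries_surjective (n : ℕ)
    (h : ∀ m, m + 1 = n → Subsingleton (Ext X (K.cycles m) 1)) :
    Function.Surjective
      (Linear.rightComp R X (toBoundaries K ((ComplexShape.up ℕ).prev n) n)) := by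
  cases n with
  | zero => exact fun f => ⟨0, (isZero_boundaries_zero K).eq_of_tgt _ _⟩
  | succ n =>
    rw [CochainComplex.prev_nat_succ]
    have := h n rfl
    exact rightComp_surjective_of_subsingleton_ext X (shortExact_cyclesSequence K n)

variable (R) in
lemma nonempty_homCohomology_linearEquiv_hom (n : ℕ) [Subsingleton (Ext X (boundaries K n) 1)]
    (h : ∀ m, m + 1 = n → Subsingleton (Ext X (K.cycles m) 1)) :
    Nonempty (HomCohomology R X K n ≃ₗ[R] (X ⟶ K.homology n)) := by
  have hS := shortExact_homologySequence K n
  have hexact : Function.Exact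
      (Linear.rightComp R X (K.toCycles ((ComplexShape.up ℕ).prev n) n))
      (Linear.rightComp R X (K.homologyπ n)) := by
    rw [rightComp_toCycles]
    exact (rightComp_toBoundaries_surjective R n h).comp_exact_iff_exact.2 (exact_rightComp X hS)
  exact ⟨hexact.linearEquivOfSurjective (rightComp_surjective_of_subsingleton_ext X hS)⟩

variable (R) in
lemma nonempty_homCohomology_linearEquiv_ext_one (n : ℕ) [Injective (K.X n)]
    [Subsingleton (X ⟶ K.homology (n + 1))] :
    Nonempty (HomCohomology R X K (n + 1) ≃ₗ[R] Ext X (K.cycles n) 1) := by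
  have hS := shortExact_cyclesSequence K n
  have := Ext.subsingleton_of_injective X (K.X n) 0
  let e := LinearEquiv.ofBijective _ (bijective_rightComp_boundariesι R X (K := K) (n + 1))
  have hexact : Function.Exact
      (Linear.rightComp R X (K.toCycles ((ComplexShape.up ℕ).prev (n + 1)) (n + 1)))
      (homToExtOne X R hS ∘ₗ e.symm.toLinearMap) := by
    rw [CochainComplex.prev_nat_succ, rightComp_toCycles]
    exact (LinearEquiv.conj_exact_iff_exact _ _ e).2 (exact_homToExtOne X hS)
  exact ⟨hexact.linearEquivOfSurjective
    ((homToExtOne_surjective X hS).comp e.symm.surjective)⟩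

variable (R) in
/-- The degeneration at `(s, t)` of the spectral sequence
`Ext X (H^q K) p ⟹ H^{p+q}(Hom(X, K))`. -/
theorem nonempty_homCohomology_linearEquiv_ext_homology [∀ n, Injective (K.X n)] (s t : ℕ)
    (h1 : ∀ p q, p + q = s + t → q ≠ t → Subsingleton (Ext X (K.homology q) p))
    (h2 : ∀ p q, p + q = s + t + 1 → q < t → Subsingleton (Ext X (K.homology q) p))
    (h3 : ∀ p q, p + q + 1 = s + t → t < q → Subsingleton (Ext X (K.homology q) p)) :
    Nonempty (HomCohomology R X K (s + t) ≃ₗ[R] Ext X (K.homology t) s) := by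
  have h1' : ∀ p q, p + q = s + t → q < t → Subsingleton (Ext X (K.homology q) p) :=
    fun p q hpq hq => h1 p q hpq hq.ne
  have := subsingleton_ext_boundaries h2 le_rfl s (by lia)
  cases s with
  | zero =>
    rw [zero_add] at *
    obtain ⟨e⟩ := nonempty_homCohomology_linearEquiv_hom R (X := X) t fun n hn =>
      subsingleton_ext_cycles h1' (by lia) 0 (by lia)
    exact ⟨e ≪≫ₗ Ext.linearEquiv₀.symm⟩
  | succ s =>
    have := subsingleton_ext_boundaries h1' le_rfl s (by lia)
    obtain ⟨e⟩ := nonempty_ext_X₂_linearEquiv_ext_X₃ R X (shortExact_homologySequence K t) (s + 1)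
    obtain ⟨e'⟩ := nonempty_ext_cycles_linearEquiv R (X := X) (K := K) (t := t) (m := s + t)
      (fun p q hpq hq => h1 p q (by lia) hq.ne') (fun p q hpq hq => h3 p q (by lia) hq) s le_rfl
      (by lia)
    have := h1 0 (s + t + 1) (by lia) (by lia)
    have := (Ext.homEquiv₀ (X := X) (Y := K.homology (s + t + 1))).symm.subsingleton
    obtain ⟨e''⟩ := nonempty_homCohomology_linearEquiv_ext_one R (X := X) (K := K) (s + t)
    rw [show s + 1 + t = s + t + 1 by lia]
    exact ⟨e'' ≪≫ₗ e'.symm ≪≫ₗ e⟩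

end Boundaries

section Torsion

variable {R : Type u} [CommRing R] (𝔞 : Ideal R)

lemma mem_primaryComponent_iff {M : Type v} [AddCommGroup M] [Module R M] {x : M} :
    x ∈ 𝔞.primaryComponent M ↔ ∃ n : ℕ, ∀ a ∈ 𝔞 ^ n, a • x = 0 := by
  simp [Ideal.primaryComponent_mem]

lemma isTorsionIdeal_quotient {𝔟 : Ideal R} {n : ℕ} (h : 𝔞 ^ n ≤ 𝔟) :
    IsTorsionIdeal 𝔞 (R ⧸ 𝔟) := by
  rintro ⟨x⟩
  exact ⟨n, fun a ha => Ideal.Quotient.eq_zero_iff_mem.2 (𝔟.mul_mem_right x (h ha))⟩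

lemma IsTorsionIdeal.apply_mem_primaryComponent {𝔞 : Ideal R} {X : Type u} [AddCommGroup X]
    [Module R X] (hX : IsTorsionIdeal 𝔞 X) {M : Type v} [AddCommGroup M] [Module R M]
    (f : X →ₗ[R] M) (x : X) : f x ∈ 𝔞.primaryComponent M := by
  obtain ⟨n, hn⟩ := hX x
  refine (mem_primaryComponent_iff 𝔞).2 ⟨n, fun a ha => ?_⟩
  rw [← map_smul, hn a ha, map_zero]

lemma exists_le_torsionBySet_pow_of_fg {M : Type v} [AddCommGroup M] [Module R M]
    {N : Submodule R M} (hN : N.FG) (h : N ≤ 𝔞.primaryComponent M) :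
    ∃ n : ℕ, N ≤ Submodule.torsionBySet R M ↑(𝔞 ^ n) := by
  have hmono : Monotone fun n : ℕ => Submodule.torsionBySet R M ↑(𝔞 ^ n) :=
    fun i j hij => Submodule.torsionBySet_le_torsionBySet_pow i j hij 𝔞
  obtain ⟨_, ⟨n, rfl⟩, hn⟩ := (CompleteLattice.isCompactElement_iff_le_of_directed_sSup_le _ N).1
    ((Submodule.fg_iff_compact N).1 hN) _ (Set.range_nonempty _)
    hmono.directed_le.directedOn_range h
  exact ⟨n, hn⟩

lemma exists_comp_eq_of_ker_le {E : Type v} {P Q : Type*} [AddCommGroup E] [Module R E]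
    [Small.{v} R] [Module.Injective R E] [AddCommGroup P] [Module R P] [AddCommGroup Q] [Module R Q]
    (f : P →ₗ[R] Q) (g : P →ₗ[R] E) (h : LinearMap.ker f ≤ LinearMap.ker g) :
    ∃ k : Q →ₗ[R] E, k ∘ₗ f = g := by
  obtain ⟨k, hk⟩ := Module.Injective.extension_property R E _ _
    ((LinearMap.ker f).liftQ f le_rfl)
    (LinearMap.ker_eq_bot.1 (Submodule.ker_liftQ_eq_bot _ _ _ le_rfl))
    ((LinearMap.ker f).liftQ g h)
  exact ⟨k, LinearMap.ext fun x => LinearMap.congr_fun hk (Submodule.Quotient.mk x)⟩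

lemma exists_pow_inf_le_pow_smul [IsNoetherianRing R] (J : Ideal R) (k : ℕ) :
    ∃ n : ℕ, 𝔞 ^ n ⊓ J ≤ 𝔞 ^ k • J := by
  obtain ⟨c, hc⟩ := Ideal.exists_pow_inf_eq_pow_smul 𝔞 J
  have h := hc (c + k) (Nat.le_add_right c k)
  rw [smul_eq_mul, Ideal.mul_top, Nat.add_sub_cancel_left] at h
  exact ⟨c + k, h.le.trans (Submodule.smul_mono le_rfl inf_le_right)⟩

/-- By Artin–Rees a map `g` from an ideal `J` to the `𝔞`-torsion of `E` factors through the image of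
`J` in some `R ⧸ 𝔞 ^ n`, and extends from there. -/
theorem injective_primaryComponent [IsNoetherianRing R] (E : Type u) [AddCommGroup E] [Module R E]
    [Module.Injective R E] : Module.Injective R (𝔞.primaryComponent E) := by
  refine Module.Baer.injective fun J g => ?_
  let g' : J →ₗ[R] E := (𝔞.primaryComponent E).subtype ∘ₗ g
  obtain ⟨k, hk⟩ : ∃ k : ℕ, LinearMap.range g' ≤ Submodule.torsionBySet R E ↑(𝔞 ^ k) := by
    refine exists_le_torsionBySet_pow_of_fg 𝔞 (Submodule.FG.of_finite) ?_
    rintro _ ⟨x, rfl⟩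
    exact (g x).2
  obtain ⟨n, hn⟩ := exists_pow_inf_le_pow_smul 𝔞 J k
  have hker : LinearMap.ker ((𝔞 ^ n).mkQ ∘ₗ J.subtype) ≤ LinearMap.ker g' := by
    have hg : 𝔞 ^ k • (⊤ : Submodule R J) ≤ LinearMap.ker g' := by
      refine Submodule.smul_le.2 fun a ha x _ => ?_
      rw [LinearMap.mem_ker, map_smul]
      exact (Submodule.mem_torsionBySet_iff _ _).1 (hk ⟨x, rfl⟩) ⟨a, ha⟩
    intro x hx
    exact hg ((Submodule.mem_smul_top_iff _ _ _).2
      (hn ⟨(Submodule.Quotient.mk_eq_zero _).1 hx, x.2⟩))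
  obtain ⟨h, hh⟩ := exists_comp_eq_of_ker_le _ g' hker
  have hmem (r : R) : (h ∘ₗ (𝔞 ^ n).mkQ) r ∈ 𝔞.primaryComponent E :=
    (isTorsionIdeal_quotient 𝔞 le_rfl).apply_mem_primaryComponent h _
  exact ⟨(h ∘ₗ (𝔞 ^ n).mkQ).codRestrict _ hmem,
    fun x hx => Subtype.ext (LinearMap.congr_fun hh ⟨x, hx⟩)⟩

/-- The functor `Γ_𝔞` sending a module to its submodule of `𝔞`-torsion elements. -/
def torsionFunctor : ModuleCat.{v} R ⥤ ModuleCat.{v} R where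
  obj M := ModuleCat.of R (𝔞.primaryComponent M)
  map f := ModuleCat.ofHom (Ideal.primaryComponent.map 𝔞 f.hom)

instance : (torsionFunctor.{u, v} 𝔞).Additive where

/-- The inclusions `Γ_𝔞(M) ⟶ M`. -/
def torsionι : torsionFunctor.{u, v} 𝔞 ⟶ 𝟭 _ where
  app M := ModuleCat.ofHom (𝔞.primaryComponent M).subtype

instance [IsNoetherianRing R] : (torsionFunctor.{u, u} 𝔞).PreservesInjectiveObjects where
  injective_obj {E} hE := by
    rw [← Module.injective_iff_injective_object] at hE ⊢
    exact injective_primaryComponent 𝔞 E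

lemma bijective_comp_torsionι {X : ModuleCat.{u} R} (hX : IsTorsionIdeal 𝔞 X)
    (M : ModuleCat.{u} R) :
    Function.Bijective fun f : X ⟶ (torsionFunctor 𝔞).obj M => f ≫ (torsionι 𝔞).app M := by
  constructor
  · intro f g h
    ext x
    exact Subtype.ext (ConcreteCategory.congr_hom h x)
  · intro f
    exact ⟨ModuleCat.ofHom (f.hom.codRestrict _ (hX.apply_mem_primaryComponent f.hom)), rfl⟩

end Torsion

section FilteredColimit

lemma bijective_desc_of_isFiltered {R : Type u} [CommRing R] {J : Type} [SmallCategory J]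
    [IsFiltered J] {F : J ⥤ ModuleCat.{u} R} {c : Cocone F} (hc : IsColimit c) (s : Cocone F)
    (hsurj : ∀ y : s.pt, ∃ j x, (s.ι.app j).hom x = y)
    (hinj : ∀ j x, (s.ι.app j).hom x = 0 → ∃ k, ∃ f : j ⟶ k, (F.map f).hom x = 0) :
    Function.Bijective (hc.desc s).hom := by
  have hfac (j) (x : F.obj j) : (hc.desc s).hom ((c.ι.app j).hom x) = (s.ι.app j).hom x :=
    ConcreteCategory.congr_hom (hc.fac s j) x
  have : PreservesFilteredColimitsOfSize.{0, 0} (forget (ModuleCat.{u} R)) :=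
    preservesFilteredColimitsOfSize_shrink.{0, u, 0, u} _
  constructor
  · refine (injective_iff_map_eq_zero _).2 fun x hx => ?_
    obtain ⟨j, x, rfl⟩ := Concrete.isColimit_exists_rep F hc x
    obtain ⟨k, f, hf⟩ := hinj j x ((hfac j x).symm.trans hx)
    calc (c.ι.app j).hom x = (c.ι.app k).hom ((F.map f).hom x) :=
          (ConcreteCategory.congr_hom (c.w f) x).symm
      _ = 0 := by rw [hf, map_zero]
  · intro y
    obtain ⟨j, x, rfl⟩ := hsurj y
    exact ⟨_, hfac j x⟩

end FilteredColimit

section LocalCohomology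

variable {R : Type u} [CommRing R] {𝔞 : Ideal R}

lemma quotient_hom_ext {𝔟 : Ideal R} {N : ModuleCat.{u} R}
    {f g : ModuleCat.of R (R ⧸ 𝔟) ⟶ N} (h : f.hom (1 : R ⧸ 𝔟) = g.hom (1 : R ⧸ 𝔟)) : f = g := by
  ext
  exact h

lemma exists_quotient_hom_apply_one_eq {𝔟 : Ideal R} {N : ModuleCat.{u} R} {x : N}
    (hx : ∀ a ∈ 𝔟, a • x = 0) : ∃ f : ModuleCat.of R (R ⧸ 𝔟) ⟶ N, f.hom (1 : R ⧸ 𝔟) = x :=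
  ⟨ModuleCat.ofHom (𝔟.liftQ (LinearMap.toSpanSingleton R N x) hx), one_smul R x⟩

/-- Evaluation at `1`, as a map from the cohomology of `Hom(R ⧸ 𝔟, K)` to that of `K`. -/
noncomputable def homologyEval (𝔟 : Ideal R) (K : CochainComplex (ModuleCat.{u} R) ℕ) (n : ℕ) :
    HomCohomology R (ModuleCat.of R (R ⧸ 𝔟)) K n →ₗ[R] K.homology n :=
  Submodule.liftQ _
    { toFun z := (K.homologyπ n).hom (z.hom (1 : R ⧸ 𝔟))
      map_add' _ _ := map_add _ _ _
      map_smul' _ _ := map_smul _ _ _ } (by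
    rintro _ ⟨y, rfl⟩
    exact ConcreteCategory.congr_hom (K.toCycles_comp_homologyπ _ n) (y.hom (1 : R ⧸ 𝔟)))

lemma homologyEval_precomp {𝔟 𝔠 : Ideal R} (K : CochainComplex (ModuleCat.{u} R) ℕ) (n : ℕ)
    {g : ModuleCat.of R (R ⧸ 𝔠) ⟶ ModuleCat.of R (R ⧸ 𝔟)} (hg : g.hom (1 : R ⧸ 𝔠) = (1 : R ⧸ 𝔟))
    (x : HomCohomology R (ModuleCat.of R (R ⧸ 𝔟)) K n) :
    homologyEval 𝔠 K n (HomCohomology.precomp g K n x) = homologyEval 𝔟 K n x := by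
  obtain ⟨z, rfl⟩ := Submodule.mkQ_surjective _ x
  exact congr((K.homologyπ n).hom (z.hom $hg))

lemma exists_homologyEval_eq {K : CochainComplex (ModuleCat.{u} R) ℕ} {n : ℕ}
    (hK : IsTorsionIdeal 𝔞 (K.X n)) (y : K.homology n) :
    ∃ k x, homologyEval (𝔞 ^ k) K n x = y := by
  obtain ⟨c, rfl⟩ := (ModuleCat.epi_iff_surjective (K.homologyπ n)).1 inferInstance y
  obtain ⟨k, hk⟩ := hK ((K.iCycles n).hom c)
  have hc : ∀ a ∈ 𝔞 ^ k, a • c = 0 := fun a ha =>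
    (ModuleCat.mono_iff_injective (K.iCycles n)).1 inferInstance <| by
      rw [map_smul, hk a ha, map_zero]
  obtain ⟨z, rfl⟩ := exists_quotient_hom_apply_one_eq hc
  exact ⟨k, Submodule.Quotient.mk z, rfl⟩

lemma exists_precomp_eq_zero_of_homologyEval_eq_zero {K : CochainComplex (ModuleCat.{u} R) ℕ}
    {n k : ℕ} (hK : IsTorsionIdeal 𝔞 (K.X ((ComplexShape.up ℕ).prev n)))
    {x : HomCohomology R (ModuleCat.of R (R ⧸ 𝔞 ^ k)) K n}
    (hx : homologyEval (𝔞 ^ k) K n x = 0) :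
    ∃ l, k ≤ l ∧ ∀ g : ModuleCat.of R (R ⧸ 𝔞 ^ l) ⟶ ModuleCat.of R (R ⧸ 𝔞 ^ k),
      g.hom (1 : R ⧸ 𝔞 ^ l) = (1 : R ⧸ 𝔞 ^ k) → HomCohomology.precomp g K n x = 0 := by
  obtain ⟨z, rfl⟩ := Submodule.mkQ_surjective _ x
  obtain ⟨y, hy⟩ := (exact_toCycles_homologyπ K n _).1 hx
  obtain ⟨m, hm⟩ := hK y
  obtain ⟨w, rfl⟩ := exists_quotient_hom_apply_one_eq (𝔟 := 𝔞 ^ max k m) fun a ha =>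
    hm a (Ideal.pow_le_pow_right (le_max_right k m) ha)
  refine ⟨max k m, le_max_left k m, fun g hg => (Submodule.Quotient.mk_eq_zero _).2 ⟨w, ?_⟩⟩
  exact quotient_hom_ext (hy.trans congr(z.hom $hg).symm)

/-- The subcomplex `Γ_𝔞(K)` of a complex `K`. -/
noncomputable abbrev torsionComplex (𝔞 : Ideal R) (K : CochainComplex (ModuleCat.{u} R) ℕ) :
    CochainComplex (ModuleCat.{u} R) ℕ :=
  ((torsionFunctor 𝔞).mapHomologicalComplex _).obj K

/-- The inclusion `Γ_𝔞(K) ⟶ K`. -/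
noncomputable def torsionComplexι (𝔞 : Ideal R) (K : CochainComplex (ModuleCat.{u} R) ℕ) :
    torsionComplex 𝔞 K ⟶ K where
  f i := (torsionι 𝔞).app (K.X i)
  comm' i j _ := ((torsionι 𝔞).naturality (K.d i j)).symm

lemma isTorsionIdeal_torsionComplex_X (K : CochainComplex (ModuleCat.{u} R) ℕ) (i : ℕ) :
    IsTorsionIdeal 𝔞 ((torsionComplex 𝔞 K).X i) := fun x =>
  have ⟨n, hn⟩ := (mem_primaryComponent_iff 𝔞).1 x.2
  ⟨n, fun a ha => Subtype.ext (hn a ha)⟩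

variable {X X' M : ModuleCat.{u} R} (I : InjectiveResolution M)

/-- `Ext` from an `𝔞`-torsion module into `M` is computed by the complex `Γ_𝔞(I)`, where `I` is an
injective resolution of `M`. -/
noncomputable def extEquivTorsion (hX : IsTorsionIdeal 𝔞 X) (n : ℕ) :
    Ext X M n ≃ₗ[R] HomCohomology R X (torsionComplex 𝔞 I.cocomplex) n :=
  (HomCohomology.extEquiv R I X n).symm ≪≫ₗ
    (LinearEquiv.ofBijective (HomCohomology.map X (torsionComplexι 𝔞 I.cocomplex) n)
      (HomCohomology.map_bijective _ (fun _ => bijective_comp_torsionι 𝔞 hX _) n)).symm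

lemma extEquiv_map_extEquivTorsion (hX : IsTorsionIdeal 𝔞 X) (n : ℕ) (x : Ext X M n) :
    HomCohomology.extEquiv R I X n (HomCohomology.map X (torsionComplexι 𝔞 I.cocomplex) n
      (extEquivTorsion I hX n x)) = x := by
  refine (LinearEquiv.eq_symm_apply _).1 ?_
  exact (LinearEquiv.ofBijective (HomCohomology.map X (torsionComplexι 𝔞 I.cocomplex) n)
    (HomCohomology.map_bijective _ (fun _ => bijective_comp_torsionι 𝔞 hX _) n)).apply_symm_apply _

lemma extEquivTorsion_naturality (hX : IsTorsionIdeal 𝔞 X) (hX' : IsTorsionIdeal 𝔞 X')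
    (g : X' ⟶ X) (n : ℕ) (x : Ext X M n) :
    extEquivTorsion I hX' n ((Ext.mk₀ g).comp x (zero_add n)) =
      HomCohomology.precomp g _ n (extEquivTorsion I hX n x) := by
  apply (HomCohomology.map_bijective (R := R) (torsionComplexι 𝔞 I.cocomplex)
    (fun _ => bijective_comp_torsionι 𝔞 hX' _) n).injective
  apply (HomCohomology.extEquiv R I X' n).injective
  rw [extEquiv_map_extEquivTorsion, HomCohomology.map_precomp, HomCohomology.extEquiv_precomp,
    extEquiv_map_extEquivTorsion]

/-- The canonical map `Ext^n(R ⧸ 𝔞 ^ k, M) → H^n(Γ_𝔞(I))`. -/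
noncomputable def extToHomologyTorsion (𝔞 : Ideal R) (k n : ℕ) :
    extIdeal (𝔞 ^ k) n M →ₗ[R] (torsionComplex 𝔞 I.cocomplex).homology n :=
  homologyEval (𝔞 ^ k) _ n ∘ₗ
    (extLinearEquiv R _ M n ≪≫ₗ extEquivTorsion I (isTorsionIdeal_quotient 𝔞 le_rfl) n).toLinearMap

lemma extToHomologyTorsion_naturality {k l n : ℕ}
    {g : ModuleCat.of R (R ⧸ 𝔞 ^ l) ⟶ ModuleCat.of R (R ⧸ 𝔞 ^ k)}
    (hg : g.hom (1 : R ⧸ 𝔞 ^ l) = (1 : R ⧸ 𝔞 ^ k)) (x : extIdeal (𝔞 ^ k) n M) :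
    extToHomologyTorsion I 𝔞 l n ((((_root_.Ext R (ModuleCat.{u} R) n).map g.op).app M).hom x) =
      extToHomologyTorsion I 𝔞 k n x :=
  calc _ = homologyEval (𝔞 ^ l) _ n (extEquivTorsion I (isTorsionIdeal_quotient 𝔞 le_rfl) n
          ((Ext.mk₀ g).comp (extLinearEquiv R _ M n x) (zero_add n))) :=
        congrArg (fun y => homologyEval (𝔞 ^ l) _ n (extEquivTorsion I _ n y))
          (extLinearEquiv_naturality g M n x)
    _ = _ := by
        rw [extEquivTorsion_naturality I (isTorsionIdeal_quotient 𝔞 le_rfl),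
          homologyEval_precomp _ _ hg]
        rfl

lemma exists_extToHomologyTorsion_eq {n : ℕ} (y : (torsionComplex 𝔞 I.cocomplex).homology n) :
    ∃ k x, extToHomologyTorsion I 𝔞 k n x = y := by
  obtain ⟨k, x, rfl⟩ := exists_homologyEval_eq (isTorsionIdeal_torsionComplex_X _ _) y
  exact ⟨k, _, congrArg (homologyEval (𝔞 ^ k) _ n) (LinearEquiv.apply_symm_apply _ x)⟩

lemma exists_ext_map_eq_zero_of_extToHomologyTorsion_eq_zero {k n : ℕ} {x : extIdeal (𝔞 ^ k) n M}
    (hx : extToHomologyTorsion I 𝔞 k n x = 0) :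
    ∃ l, k ≤ l ∧ ∀ g : ModuleCat.of R (R ⧸ 𝔞 ^ l) ⟶ ModuleCat.of R (R ⧸ 𝔞 ^ k),
      g.hom (1 : R ⧸ 𝔞 ^ l) = (1 : R ⧸ 𝔞 ^ k) →
        (((_root_.Ext R (ModuleCat.{u} R) n).map g.op).app M).hom x = 0 := by
  obtain ⟨l, hkl, hl⟩ := exists_precomp_eq_zero_of_homologyEval_eq_zero
    (isTorsionIdeal_torsionComplex_X _ _) hx
  refine ⟨l, hkl, fun g hg => ?_⟩
  apply (extLinearEquiv R _ M n).injective
  apply (extEquivTorsion I (isTorsionIdeal_quotient 𝔞 le_rfl) n).injective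
  refine (congrArg _ (extLinearEquiv_naturality g M n x)).trans ?_
  refine (extEquivTorsion_naturality I (isTorsionIdeal_quotient 𝔞 le_rfl) _ g n _).trans ?_
  exact (hl g hg).trans (by simp only [map_zero])

theorem nonempty_localCohomology_linearEquiv (𝔞 : Ideal R) (n : ℕ) :
    Nonempty ((localCohomology 𝔞 n).obj M ≃ₗ[R] (torsionComplex 𝔞 I.cocomplex).homology n) := by
  let D := localCohomology.diagram (localCohomology.idealPowersDiagram 𝔞) n
  have := localCohomology.hasColimitDiagram (localCohomology.idealPowersDiagram 𝔞) n
  let s : Cocone (D ⋙ (evaluation _ _).obj M) :=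
    { pt := (torsionComplex 𝔞 I.cocomplex).homology n
      ι :=
        { app j := ModuleCat.ofHom (extToHomologyTorsion I 𝔞 j.unop.unop n)
          naturality j k f := by
            ext x
            exact extToHomologyTorsion_naturality I rfl x } }
  refine ⟨LinearEquiv.ofBijective _ (bijective_desc_of_isFiltered
    (isColimitOfPreserves ((evaluation _ _).obj M) (colimit.isColimit D)) s ?_ fun j x hx => ?_)⟩
  · intro y
    obtain ⟨k, x, rfl⟩ := exists_extToHomologyTorsion_eq I y
    exact ⟨.op (.op k), x, rfl⟩
  · obtain ⟨l, hkl, hl⟩ := exists_ext_map_eq_zero_of_extToHomologyTorsion_eq_zero I hx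
    exact ⟨.op (.op l), (homOfLE hkl).op.op, hl _ rfl⟩

end LocalCohomology

section Localization

open ModuleCat (localizedModuleFunctor)

variable {R : Type u} [CommRing R] (S : Submonoid R)

lemma localizedModule_linearMap_ext {M P : Type*} [AddCommGroup M] [Module R M] [AddCommGroup P]
    [Module (Localization S) P] {f g : LocalizedModule S M →ₗ[Localization S] P}
    (h : ∀ m, f (LocalizedModule.mk m 1) = g (LocalizedModule.mk m 1)) : f = g := by
  ext x
  induction x using LocalizedModule.induction_on with
  | h m s =>
    have hm : LocalizedModule.mk m s =
        (Localization.mk 1 s : Localization S) • LocalizedModule.mk m (1 : S) := by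
      rw [LocalizedModule.mk_smul_mk, one_smul, mul_one]
    rw [hm, map_smul, map_smul, h]

/-- Localization at `S` commutes with `Hom(X, -)` when `X` is finitely presented. -/
noncomputable def localizedHomEquiv (X M : ModuleCat.{u} R) [Module.FinitePresentation R X] :
    LocalizedModule S (X ⟶ M) ≃ₗ[Localization S]
      ((localizedModuleFunctor S).obj X ⟶ (localizedModuleFunctor S).obj M) :=
  (IsLocalizedModule.iso S (IsLocalizedModule.mapExtendScalars S (X.localizedModuleMkLinearMap S)
    (M.localizedModuleMkLinearMap S) (Localization S) ∘ₗ
      (ModuleCat.homLinearEquiv (S := R)).toLinearMap)).extendScalarsOfIsLocalization S _ ≪≫ₗ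
    (ModuleCat.homLinearEquiv (S := Localization S)).symm

lemma localizedHomEquiv_mk {X M : ModuleCat.{u} R} [Module.FinitePresentation R X] (f : X ⟶ M) :
    localizedHomEquiv S X M (LocalizedModule.mk f 1) =
      (localizedModuleFunctor S).map f :=
  congrArg (ModuleCat.homLinearEquiv (S := Localization S)).symm
    (IsLocalizedModule.iso_mk_one S _ f)

lemma localizedHomEquiv_naturality {X M N : ModuleCat.{u} R} [Module.FinitePresentation R X]
    (g : M ⟶ N) :
    Linear.rightComp (Localization S) _ ((localizedModuleFunctor S).map g) ∘ₗ
        (localizedHomEquiv S X M).toLinearMap =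
      (localizedHomEquiv S X N).toLinearMap ∘ₗ LocalizedModule.map S (Linear.rightComp R X g) := by
  refine localizedModule_linearMap_ext S fun f => ?_
  calc localizedHomEquiv S X M (LocalizedModule.mk f 1) ≫ _ =
      (localizedModuleFunctor S).map f ≫ (localizedModuleFunctor S).map g :=
        congrArg (· ≫ _) (localizedHomEquiv_mk S f)
    _ = (localizedModuleFunctor S).map (f ≫ g) := (Functor.map_comp _ f g).symm
    _ = localizedHomEquiv S X N (LocalizedModule.mk (f ≫ g) 1) := (localizedHomEquiv_mk S _).symm
    _ = localizedHomEquiv S X N (LocalizedModule.map S (Linear.rightComp R X g) _) :=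
        congrArg _ (LocalizedModule.map_mk S (Linear.rightComp R X g) f 1).symm

/-- The isomorphism of localized modules induced by an isomorphism. -/
noncomputable abbrev localizedEquiv {M N : Type*} [AddCommGroup M] [Module R M] [AddCommGroup N]
    [Module R N] (e : M ≃ₗ[R] N) : LocalizedModule S M ≃ₗ[Localization S] LocalizedModule S N :=
  IsLocalizedModule.mapEquiv S (LocalizedModule.mkLinearMap S M) (LocalizedModule.mkLinearMap S N)
    (Localization S) e

variable [IsNoetherianRing R]

instance {T : ShortComplex (ModuleCat.{u} R)} [Injective T.X₂] :
    Injective (T.map (localizedModuleFunctor S)).X₂ :=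
  (localizedModuleFunctor.{u} S).injective_obj T.X₂

lemma nonempty_localizedModule_ext_one_linearEquiv (X : ModuleCat.{u} R)
    [Module.FinitePresentation R X] {T : ShortComplex (ModuleCat.{u} R)} (hT : T.ShortExact)
    [Injective T.X₂] :
    Nonempty (LocalizedModule S (Ext X T.X₁ 1) ≃ₗ[Localization S]
      Ext ((localizedModuleFunctor S).obj X) ((localizedModuleFunctor S).obj T.X₁) 1) := by
  have hT' := hT.map_of_exact (localizedModuleFunctor S)
  have := Ext.subsingleton_of_injective X T.X₂ 0
  have := Ext.subsingleton_of_injective ((localizedModuleFunctor S).obj X)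
    (T.map (localizedModuleFunctor S)).X₂ 0
  let δ := LocalizedModule.map S (homToExtOne X R hT) ∘ₗ
    (localizedHomEquiv S X T.X₃).symm.toLinearMap
  have hS : Function.Exact (LocalizedModule.map S (Linear.rightComp R X T.g))
      (LocalizedModule.map S (homToExtOne X R hT)) :=
    LocalizedModule.map_exact S _ _ (exact_homToExtOne X hT)
  have hδ : Function.Exact (Linear.rightComp (Localization S) ((localizedModuleFunctor S).obj X)
      ((localizedModuleFunctor S).map T.g)) δ := by
    refine .of_ladder_linearEquiv_of_exact (e₁ := localizedHomEquiv S X T.X₂)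
      (e₂ := localizedHomEquiv S X T.X₃) (e₃ := .refl _ _) (localizedHomEquiv_naturality S T.g)
      (LinearMap.ext fun x => ?_) hS
    exact congrArg (LocalizedModule.map S (homToExtOne X R hT)) (LinearEquiv.symm_apply_apply _ x)
  have hδs : Function.Surjective δ :=
    (LocalizedModule.map_surjective S _ (homToExtOne_surjective X hT)).comp
      (localizedHomEquiv S X T.X₃).symm.surjective
  exact ⟨(hδ.linearEquivOfSurjective hδs).symm ≪≫ₗ
    (exact_homToExtOne _ hT').linearEquivOfSurjective
      (homToExtOne_surjective ((localizedModuleFunctor S).obj X) hT')⟩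

theorem nonempty_localizedModule_ext_linearEquiv (X M : ModuleCat.{u} R)
    [Module.FinitePresentation R X] (n : ℕ) :
    Nonempty (LocalizedModule S (Ext X M n) ≃ₗ[Localization S]
      Ext ((localizedModuleFunctor S).obj X) ((localizedModuleFunctor S).obj M) n) := by
  induction n generalizing M with
  | zero =>
    exact ⟨localizedEquiv S (Ext.linearEquiv₀ (R := R)) ≪≫ₗ localizedHomEquiv S X M ≪≫ₗ
      Ext.linearEquiv₀.symm⟩
  | succ n ih =>
    let T : ShortComplex (ModuleCat.{u} R) :=
      ShortComplex.mk (Injective.ι M) (cokernel.π (Injective.ι M)) (cokernel.condition _)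
    have hT : T.ShortExact := { exact := ShortComplex.exact_cokernel _ }
    have : Injective T.X₂ := inferInstanceAs (Injective (Injective.under M))
    cases n with
    | zero => exact nonempty_localizedModule_ext_one_linearEquiv S X hT
    | succ n =>
      have hT' := hT.map_of_exact (localizedModuleFunctor S)
      have h (m : ℕ) := Ext.subsingleton_of_injective X T.X₂ m
      have h' (m : ℕ) := Ext.subsingleton_of_injective ((localizedModuleFunctor S).obj X)
        (T.map (localizedModuleFunctor S)).X₂ m
      obtain ⟨e⟩ := nonempty_ext_X₃_linearEquiv_ext_X₁ R X hT (n + 1)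
      obtain ⟨e'⟩ := nonempty_ext_X₃_linearEquiv_ext_X₁ (Localization S)
        ((localizedModuleFunctor S).obj X) hT' (n + 1)
      obtain ⟨e''⟩ := ih T.X₃
      exact ⟨localizedEquiv S e.symm ≪≫ₗ e'' ≪≫ₗ e'⟩

end Localization

section TorsionExt

variable {R : Type u} [CommRing R]

lemma nonempty_extObj_linearEquiv_ext {X X' M M' : ModuleCat.{u} R} (e : X ≃ₗ[R] X')
    (e' : M ≃ₗ[R] M') (n : ℕ) : Nonempty (extObj X M n ≃ₗ[R] Ext X' M' n) :=
  ⟨((((_root_.Ext R (ModuleCat.{u} R) n).mapIso e.toModuleIso.symm.op).app M) ≪≫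
    ((_root_.Ext R (ModuleCat.{u} R) n).obj (.op X')).mapIso e'.toModuleIso).toLinearEquiv ≪≫ₗ
      extLinearEquiv R X' M' n⟩

theorem nonempty_extObj_linearEquiv_extObj_localCohomology [IsNoetherianRing R] {𝔞 : Ideal R}
    {X : ModuleCat.{u} R} (hX : IsTorsionIdeal 𝔞 X) (M : ModuleCat.{u} R) (s t : ℕ)
    (h1 : ∀ p q, p + q = s + t → q ≠ t →
      Subsingleton (extObj X ((localCohomology 𝔞 q).obj M) p))
    (h2 : ∀ p q, p + q = s + t + 1 → q < t →
      Subsingleton (extObj X ((localCohomology 𝔞 q).obj M) p))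
    (h3 : ∀ p q, p + q + 1 = s + t → t < q →
      Subsingleton (extObj X ((localCohomology 𝔞 q).obj M) p)) :
    Nonempty (extObj X M (s + t) ≃ₗ[R] extObj X ((localCohomology 𝔞 t).obj M) s) := by
  let I := injectiveResolution M
  have (n : ℕ) : Injective ((torsionComplex 𝔞 I.cocomplex).X n) :=
    (torsionFunctor 𝔞).injective_obj _
  have transport {p q : ℕ} (h : Subsingleton (extObj X ((localCohomology 𝔞 q).obj M) p)) :
      Subsingleton (Ext X ((torsionComplex 𝔞 I.cocomplex).homology q) p) :=
    have ⟨e⟩ := nonempty_localCohomology_linearEquiv I 𝔞 q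
    have ⟨e'⟩ := nonempty_extObj_linearEquiv_ext (.refl R X) e p
    e'.symm.subsingleton
  obtain ⟨e⟩ := nonempty_homCohomology_linearEquiv_ext_homology R (X := X) s t
    (fun p q hpq hq => transport (h1 p q hpq hq)) (fun p q hpq hq => transport (h2 p q hpq hq))
    (fun p q hpq hq => transport (h3 p q hpq hq))
  obtain ⟨e₁⟩ := nonempty_localCohomology_linearEquiv I 𝔞 t
  obtain ⟨e₂⟩ := nonempty_extObj_linearEquiv_ext (.refl R X) e₁ s
  exact ⟨extLinearEquiv R X M (s + t) ≪≫ₗ extEquivTorsion I hX (s + t) ≪≫ₗ e ≪≫ₗ e₂.symm⟩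

end TorsionExt

section Bass

variable {R : Type u} [CommRing R]

/-- The localization of `R ⧸ 𝔭` at `𝔭` is the residue field of `R_𝔭`. -/
noncomputable def localizedQuotientEquivResidueField (𝔭 : Ideal R) [𝔭.IsPrime] :
    LocalizedModule 𝔭.primeCompl (R ⧸ 𝔭) ≃ₗ[Localization.AtPrime 𝔭]
      IsLocalRing.ResidueField (Localization.AtPrime 𝔭) :=
  (IsLocalizedModule.iso 𝔭.primeCompl
      (Submodule.toLocalizedQuotient' (Localization.AtPrime 𝔭) 𝔭.primeCompl
        (Algebra.linearMap R (Localization.AtPrime 𝔭)) 𝔭)).extendScalarsOfIsLocalization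
        𝔭.primeCompl (Localization.AtPrime 𝔭) ≪≫ₗ
    Submodule.quotEquivOfEq _ (IsLocalRing.maximalIdeal (Localization.AtPrime 𝔭))
      ((Ideal.localized'_eq_map _ _ _).trans (Localization.AtPrime.map_eq_maximalIdeal))

variable [IsNoetherianRing R]

lemma bassNumber_eq_krullDim_submodule (𝔭 : Ideal R) [𝔭.IsPrime] (n : ℕ) (M : ModuleCat.{u} R) :
    bassNumber 𝔭 n M = Order.krullDim (Submodule (Localization.AtPrime 𝔭)
      (LocalizedModule 𝔭.primeCompl (extIdeal 𝔭 n M))) := by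
  have : Module.FinitePresentation R (ModuleCat.of R (R ⧸ 𝔭)) :=
    Module.finitePresentation_of_finite R (R ⧸ 𝔭)
  obtain ⟨e⟩ := nonempty_extObj_linearEquiv_ext
    (X := ModuleCat.of (Localization.AtPrime 𝔭)
      (IsLocalRing.ResidueField (Localization.AtPrime 𝔭)))
    (X' := (ModuleCat.of R (R ⧸ 𝔭)).localizedModule 𝔭.primeCompl)
    (M := ModuleCat.of (Localization.AtPrime 𝔭) (LocalizedModule 𝔭.primeCompl M))
    (M' := M.localizedModule 𝔭.primeCompl)
    ((localizedQuotientEquivResidueField 𝔭).symm ≪≫ₗ (Shrink.linearEquiv _ _).symm)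
    (Shrink.linearEquiv _ _).symm n
  obtain ⟨e'⟩ := nonempty_localizedModule_ext_linearEquiv 𝔭.primeCompl (ModuleCat.of R (R ⧸ 𝔭)) M n
  exact Order.krullDim_eq_of_orderIso (Submodule.orderIsoMapComap
    (e ≪≫ₗ e'.symm ≪≫ₗ localizedEquiv 𝔭.primeCompl (extLinearEquiv R _ M n).symm))

end Bass

theorem bassNumber_eq_bassNumber_localCohomology_general
    {R : Type u} [CommRing R] [IsNoetherianRing R] (𝔞 𝔭 : Ideal R) [𝔭.IsPrime] (h𝔞𝔭 : 𝔞 ≤ 𝔭)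
    (M : ModuleCat.{u} R) (s t : ℕ)
    (h1 : ∀ p q, p + q = s + t → q ≠ t →
      Subsingleton (extIdeal 𝔭 p ((localCohomology 𝔞 q).obj M)))
    (h2 : ∀ p q, p + q = s + t + 1 → q < t →
      Subsingleton (extIdeal 𝔭 p ((localCohomology 𝔞 q).obj M)))
    (h3 : ∀ p q, p + q + 1 = s + t → t < q →
      Subsingleton (extIdeal 𝔭 p ((localCohomology 𝔞 q).obj M))) :
    bassNumber 𝔭 (s + t) M = bassNumber 𝔭 s ((localCohomology 𝔞 t).obj M) := by
  have hX : IsTorsionIdeal 𝔞 (R ⧸ 𝔭) := isTorsionIdeal_quotient 𝔞 (n := 1) (by simpa using h𝔞𝔭)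
  obtain ⟨e⟩ := nonempty_extObj_linearEquiv_extObj_localCohomology
    (X := ModuleCat.of R (R ⧸ 𝔭)) hX M s t h1 h2 h3
  rw [bassNumber_eq_krullDim_submodule, bassNumber_eq_krullDim_submodule]
  exact Order.krullDim_eq_of_orderIso (Submodule.orderIsoMapComap
    (localizedEquiv 𝔭.primeCompl e))

/-- Yang–Shen, Corollary 4.5 (module case): let `𝔭 ⊇ 𝔞` be a prime ideal of a noetherian ring
`R`, `M` an `R`-module and `s, t ≥ 0` integers such that
(1) `Ext^{s+t-i}_R(R/𝔭, H^i_𝔞(M)) = 0` for `0 ≤ i < t` and for `t+1 ≤ i ≤ s+t`;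
(2) `Ext^{s+1+i}_R(R/𝔭, H^{t-i}_𝔞(M)) = 0` for `0 ≤ i ≤ t`;
(3) `Ext^{s-1-i}_R(R/𝔭, H^{t+i}_𝔞(M)) = 0` for `0 ≤ i ≤ s-1`.
Then `μ^{s+t}(𝔭, M) = μ^s(𝔭, H^t_𝔞(M))`. -/
theorem bassNumber_eq_bassNumber_localCohomology
    {R : Type u} [CommRing R] [IsNoetherianRing R] (𝔞 𝔭 : Ideal R) [𝔭.IsPrime] (h𝔞𝔭 : 𝔞 ≤ 𝔭)
    (M : ModuleCat.{u} R) (s t : ℕ)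
    (h1 : ∀ i : ℕ, (i < t ∨ (t + 1 ≤ i ∧ i ≤ s + t)) →
      Subsingleton (extIdeal 𝔭 (s + t - i) ((localCohomology 𝔞 i).obj M)))
    (h2 : ∀ i : ℕ, i ≤ t →
      Subsingleton (extIdeal 𝔭 (s + 1 + i) ((localCohomology 𝔞 (t - i)).obj M)))
    (h3 : ∀ i : ℕ, i < s →
      Subsingleton (extIdeal 𝔭 (s - 1 - i) ((localCohomology 𝔞 (t + i)).obj M))) :
    bassNumber 𝔭 (s + t) M = bassNumber 𝔭 s ((localCohomology 𝔞 t).obj M) := by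
  refine bassNumber_eq_bassNumber_localCohomology_general 𝔞 𝔭 h𝔞𝔭 M s t
    (fun p q hpq hq => ?_) (fun p q hpq hq => ?_) (fun p q hpq hq => ?_)
  · obtain rfl : p = s + t - q := by lia
    exact h1 q (by lia)
  · have := h2 (t - q) (by lia)
    rwa [show t - (t - q) = q by lia, show s + 1 + (t - q) = p by lia] at this
  · have := h3 (q - t) (by lia)
    rwa [show t + (q - t) = q by lia, show s - 1 - (q - t) = p by lia] at this
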